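/- Let k → A → H → B → k be an exact sequence of cosemisimple Hopf algebras. Then ∼_H is an equivalence relation on the set Ĥ of isomorphism classes of simple right H-comodules, and for V, W ∈ Ĥ the following are equivalent: (1) V ∼_H W, i.e. hom^B(V,W) ≠ 0; (2) V and W, corestricted to B, have the same simple constituents; (3) V embeds into W⊗A as a right H-comodule, where W⊗A carries the tensor-product H-comodule structure. -/

import Mathlib

/- Common infrastructure: right comodules over coalgebras, simplicity,
cosemisimplicity, subcoalgebras, adjoint coactions, normality, etc. -/

open TensorProduct

universe u

namespace QG

variable (k : Type u) [Field k]

section Coalg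

variable (C : Type u) [AddCommGroup C] [Module k C] [Coalgebra k C]

/-- `ρ : V →ₗ[k] V ⊗[k] C` is a (coassociative, counital) right coaction. -/
structure IsComod {V : Type u} [AddCommGroup V] [Module k V]
    (ρ : V →ₗ[k] V ⊗[k] C) : Prop where
  coassoc : ∀ v : V, ρ.rTensor C (ρ v) =
    (TensorProduct.assoc k V C C).symm.toLinearMap
      ((Coalgebra.comul (R := k) (A := C)).lTensor V (ρ v))
  counit : ∀ v : V, (TensorProduct.rid k V)
      ((Coalgebra.counit (R := k) (A := C)).lTensor V (ρ v)) = v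

/-- A submodule `U ≤ V` is a subcomodule if the coaction restricts to it,
i.e. maps `U` into the image of `U ⊗ C` in `V ⊗ C`. -/
def IsSubcomod {V : Type u} [AddCommGroup V] [Module k V]
    (ρ : V →ₗ[k] V ⊗[k] C) (U : Submodule k V) : Prop :=
  ∀ u ∈ U, ρ u ∈ LinearMap.range ((U.subtype).rTensor C)

/-- A simple subcomodule: a nonzero subcomodule with no nonzero proper
subcomodules below it. -/
def IsSimpleSubcomod {V : Type u} [AddCommGroup V] [Module k V]
    (ρ : V →ₗ[k] V ⊗[k] C) (U : Submodule k V) : Prop :=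
  IsSubcomod k C ρ U ∧ U ≠ ⊥ ∧
    ∀ U' : Submodule k V, U' ≤ U → IsSubcomod k C ρ U' → U' = ⊥ ∨ U' = U

/-- A comodule is simple if it is simple as a subcomodule of itself. -/
def IsSimpleComod {V : Type u} [AddCommGroup V] [Module k V]
    (ρ : V →ₗ[k] V ⊗[k] C) : Prop :=
  IsSimpleSubcomod k C ρ ⊤

/-- Morphisms of right `C`-comodules. -/
def IsComodHom {V W : Type u} [AddCommGroup V] [Module k V]
    [AddCommGroup W] [Module k W]
    (ρV : V →ₗ[k] V ⊗[k] C) (ρW : W →ₗ[k] W ⊗[k] C) (f : V →ₗ[k] W) : Prop :=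
  ρW ∘ₗ f = (f.rTensor C) ∘ₗ ρV

/-- `C` is cosemisimple: every right `C`-comodule is an (internal) direct sum
of simple subcomodules. -/
def IsCosemisimple : Prop :=
  ∀ (V : Type u) [AddCommGroup V] [Module k V]
    (ρ : V →ₗ[k] V ⊗[k] C), IsComod k C ρ →
    ∃ (ι : Type u) (U : ι → Submodule k V),
      (∀ i, IsSimpleSubcomod k C ρ (U i)) ∧
      iSupIndep U ∧ (⨆ i, U i) = ⊤

/-- Subcoalgebras of `C`, as submodules. -/
def IsSubcoalgebra (D : Submodule k C) : Prop :=
  ∀ x ∈ D, Coalgebra.comul (R := k) x ∈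
    LinearMap.range (TensorProduct.map D.subtype D.subtype)

/-- Simple subcoalgebras: nonzero ones with no nonzero proper subcoalgebras. -/
def IsSimpleSubcoalgebra (D : Submodule k C) : Prop :=
  IsSubcoalgebra k C D ∧ D ≠ ⊥ ∧
    ∀ D' : Submodule k C, D' ≤ D → IsSubcoalgebra k C D' → D' = ⊥ ∨ D' = D

/-- The coefficient space of a comodule: the smallest submodule `D ≤ C` such
that the coaction factors through `V ⊗ D`.  For a simple comodule this is its
coefficient coalgebra. -/
def coeffSpace {V : Type u} [AddCommGroup V] [Module k V]
    (ρ : V →ₗ[k] V ⊗[k] C) : Submodule k C :=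
  sInf {D : Submodule k C | ∀ v : V, ρ v ∈ LinearMap.range ((D.subtype).lTensor V)}

/-- Corestriction of a coaction along a linear map of coalgebras `π : C → D`. -/
noncomputable def cores {D : Type u} [AddCommGroup D] [Module k D]
    {V : Type u} [AddCommGroup V] [Module k V]
    (π : C →ₗ[k] D) (ρ : V →ₗ[k] V ⊗[k] C) : V →ₗ[k] V ⊗[k] D :=
  (π.lTensor V) ∘ₗ ρ

end Coalg

section Bialg

variable (H : Type u) [Ring H] [Bialgebra k H]

/-- An invariant vector for a coaction of a bialgebra. -/
def IsInvariant {V : Type u} [AddCommGroup V] [Module k V]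
    (ρ : V →ₗ[k] V ⊗[k] H) (v : V) : Prop :=
  ρ v = v ⊗ₜ[k] (1 : H)

/-- The tensor product coaction on `V ⊗ W` for a bialgebra `H`:
`v ⊗ w ↦ (v₀ ⊗ w₀) ⊗ v₁w₁`. -/
noncomputable def tensorCoact {V W : Type u}
    [AddCommGroup V] [Module k V] [AddCommGroup W] [Module k W]
    (ρV : V →ₗ[k] V ⊗[k] H) (ρW : W →ₗ[k] W ⊗[k] H) :
    (V ⊗[k] W) →ₗ[k] (V ⊗[k] W) ⊗[k] H :=
  ((LinearMap.mul' k H).lTensor (V ⊗[k] W)) ∘ₗ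
    (TensorProduct.tensorTensorTensorComm k V H W H).toLinearMap ∘ₗ
    (TensorProduct.map ρV ρW)

/-- `O(G/H)`: the right coinvariants `{x | (id ⊗ π)Δ(x) = x ⊗ 1}` of a
quotient map `π`. -/
noncomputable def quotientSpaceLeft {B : Type u} [AddCommGroup B] [Module k B] [One B]
    (π : H →ₗ[k] B) : Submodule k H :=
  LinearMap.ker ((π.lTensor H) ∘ₗ (Coalgebra.comul (R := k) (A := H)) -
    (TensorProduct.mk k H B).flip 1)

/-- `O(H\G)`: the left coinvariants `{x | (π ⊗ id)Δ(x) = 1 ⊗ x}`. -/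
noncomputable def quotientSpaceRight {B : Type u} [AddCommGroup B] [Module k B] [One B]
    (π : H →ₗ[k] B) : Submodule k H :=
  LinearMap.ker ((π.rTensor H) ∘ₗ (Coalgebra.comul (R := k) (A := H)) -
    (TensorProduct.mk k B H) 1)

end Bialg

section Hopf

variable (H : Type u) [Ring H] [HopfAlgebra k H]

/-- Iterated comultiplication `x ↦ x₁ ⊗ (x₂ ⊗ x₃)`. -/
noncomputable def comul2 : H →ₗ[k] H ⊗[k] (H ⊗[k] H) :=
  ((Coalgebra.comul (R := k) (A := H)).lTensor H) ∘ₗ (Coalgebra.comul (R := k) (A := H))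

/-- The right adjoint coaction `x ↦ x₂ ⊗ S(x₁)x₃`. -/
noncomputable def adR : H →ₗ[k] H ⊗[k] H :=
  ((LinearMap.mul' k H).lTensor H) ∘ₗ
    (TensorProduct.assoc k H H H).toLinearMap ∘ₗ
    (((TensorProduct.comm k H H).toLinearMap).rTensor H) ∘ₗ
    (TensorProduct.assoc k H H H).symm.toLinearMap ∘ₗ
    ((HopfAlgebra.antipode (R := k) (A := H)).rTensor (H ⊗[k] H)) ∘ₗ
    comul2 k H

/-- The left adjoint coaction `x ↦ x₁S(x₃) ⊗ x₂` (a left coaction, with the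
coacting tensorand on the left). -/
noncomputable def adL : H →ₗ[k] H ⊗[k] H :=
  ((LinearMap.mul' k H).rTensor H) ∘ₗ
    (TensorProduct.assoc k H H H).symm.toLinearMap ∘ₗ
    (((TensorProduct.comm k H H).toLinearMap).lTensor H) ∘ₗ
    (((HopfAlgebra.antipode (R := k) (A := H)).lTensor H).lTensor H) ∘ₗ
    comul2 k H

variable {B : Type u} [AddCommGroup B] [Module k B]

/-- `π : O(G) → O(H)` is right-normal: it is a morphism of right
`O(G)`-comodules for the right adjoint coaction, i.e. the right adjoint
coaction descends along `π`. -/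
def IsRightNormal (π : H →ₗ[k] B) : Prop :=
  ∃ ρ : B →ₗ[k] B ⊗[k] H, ρ ∘ₗ π = (π.rTensor H) ∘ₗ adR k H

/-- `π : O(G) → O(H)` is left-normal: the left adjoint coaction descends
along `π`. -/
def IsLeftNormal (π : H →ₗ[k] B) : Prop :=
  ∃ lam : B →ₗ[k] H ⊗[k] B, lam ∘ₗ π = (π.lTensor H) ∘ₗ adL k H

end Hopf

end QG

namespace QG

variable (k : Type u) [Field k]

section Coalg2

variable (C : Type u) [AddCommGroup C] [Module k C] [Coalgebra k C]

/-- A bundled simple right `C`-comodule. -/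
structure SimpleComodule where
  V : Type u
  [addCommGroup : AddCommGroup V]
  [module : Module k V]
  ρ : V →ₗ[k] V ⊗[k] C
  isComod : IsComod k C ρ
  isSimple : IsSimpleComod k C ρ

attribute [instance] SimpleComodule.addCommGroup SimpleComodule.module

/-- A simple comodule `(T, ρT)` is a constituent of a comodule `(V, ρV)`
(over a cosemisimple coalgebra) iff there is a nonzero comodule map `T → V`. -/
def IsConstituent {T V : Type u} [AddCommGroup T] [Module k T]
    [AddCommGroup V] [Module k V]
    (ρT : T →ₗ[k] T ⊗[k] C) (ρV : V →ₗ[k] V ⊗[k] C) : Prop :=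
  ∃ f : T →ₗ[k] V, f ≠ 0 ∧ IsComodHom k C ρT ρV f

/-- Isomorphism of (simple) comodules. -/
def comodIsoRel (X Y : SimpleComodule k C) : Prop :=
  ∃ e : X.V ≃ₗ[k] Y.V, IsComodHom k C X.ρ Y.ρ e.toLinearMap

/-- The set `Ĉ` of isomorphism classes of simple right `C`-comodules. -/
def SimpleComodQuot := Quot (comodIsoRel k C)

/-- The isomorphism class of a simple comodule. -/
def SimpleComodule.cls (X : SimpleComodule k C) : SimpleComodQuot k C :=
  Quot.mk _ X

/-- Group-like elements of a coalgebra; these correspond to the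
one-dimensional comodules, i.e. to characters. -/
def IsGroupLike (a : C) : Prop :=
  Coalgebra.counit (R := k) (A := C) a = (1 : k) ∧
    Coalgebra.comul (R := k) (A := C) a = a ⊗ₜ[k] a

/-- A linear map `φ : C → Z` out of a coalgebra is central if
`φ(x₁) ⊗ x₂ = φ(x₂) ⊗ x₁`. -/
def IsCentralMap {Z : Type u} [AddCommGroup Z] [Module k Z] (φ : C →ₗ[k] Z) : Prop :=
  (φ.rTensor C) ∘ₗ (Coalgebra.comul (R := k) (A := C)) =
    (φ.rTensor C) ∘ₗ (TensorProduct.comm k C C).toLinearMap ∘ₗ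
      (Coalgebra.comul (R := k) (A := C))

/-- The simple comodule `X` has "central character" `g` with respect to the
quotient map `γ : C → Z`: corestricted along `γ`, the coaction on `X` is a sum
of copies of the character `g`. -/
def HasCentralChar {Z : Type u} [AddCommGroup Z] [Module k Z]
    (γ : C →ₗ[k] Z) (X : SimpleComodule k C) (g : Z) : Prop :=
  ∀ v : X.V, cores k C γ X.ρ v = v ⊗ₜ[k] g

end Coalg2

/-- The k-span of the set of products `g * a`, `a ∈ Am`; for `Am` a submodule
this is the left ideal generated by `Am`. -/
def leftIdealGen {G : Type u} [Ring G] [Module k G] (Am : Submodule k G) :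
    Submodule k G :=
  Submodule.span k {x : G | ∃ g : G, ∃ a ∈ Am, x = g * a}

end QG

/-
A right `C`-comodule is a module over the convolution algebra `C*` through `v ↦ v₀ φ(v₁)`, with the
same submodules and morphisms, so over a cosemisimple `C` every comodule map `f` has a quasi-inverse
`g`, i.e. `f g f = f`.

Applied to `A → H`, this gives an `H`-colinear projection of `H` onto `A`. Followed by the counit it
is a right `A`-linear extension `e : H → k` of the counit of `A`, so `e` kills `HA⁻ = ker π` and
descends to `B`; applying it to `π(h₁) ⊗ h₂ = 1 ⊗ h` shows that left coinvariants `h` of `π` lie in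
`A`.

The twist `w ⊗ h ↦ w₀ ⊗ w₁h` identifies the tensor product comodule `W ⊗ H` with the cofree comodule
on the vector space `W`. A linear map `f : V → W` thus corresponds to the `H`-comodule map
`v ↦ f(v₀)₀ ⊗ S(f(v₀)₁)v₁` from `V` to `W ⊗ H`, and if `f` is `B`-colinear, the right-hand factor is
left coinvariant, hence lies in `A`. Conversely `A` is right coinvariant, so `B` does not see the
factor `A` of `W ⊗ A`, and an embedding of `V` into `W ⊗ A` followed by functionals on `A` yields
enough `B`-colinear maps from `V` to `W`: every `B`-constituent of `V` is one of `W`.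
-/

namespace QG

open Coalgebra LinearMap WithConv

variable {k : Type u} [Field k]

section Slice

variable {V W C D : Type u} [AddCommGroup V] [Module k V] [AddCommGroup W] [Module k W]
  [AddCommGroup C] [Module k C] [AddCommGroup D] [Module k D]

/-- The slice map `id ⊗ φ : V ⊗ C → V` of a functional `φ` on `C`. -/
noncomputable def slice (φ : C →ₗ[k] k) : V ⊗[k] C →ₗ[k] V :=
  (TensorProduct.rid k V).toLinearMap ∘ₗ φ.lTensor V

@[simp]
lemma slice_tmul (φ : C →ₗ[k] k) (v : V) (c : C) : slice φ (v ⊗ₜ[k] c) = φ c • v := by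
  simp [slice]

lemma slice_add (φ ψ : C →ₗ[k] k) (x : V ⊗[k] C) : slice (φ + ψ) x = slice φ x + slice ψ x := by
  simp [slice, LinearMap.lTensor_add]

lemma slice_smul (r : k) (φ : C →ₗ[k] k) (x : V ⊗[k] C) : slice (r • φ) x = r • slice φ x := by
  simp [slice, LinearMap.lTensor_smul]

lemma slice_rTensor (φ : C →ₗ[k] k) (f : V →ₗ[k] W) (x : V ⊗[k] C) :
    slice φ (f.rTensor C x) = f (slice φ x) := by
  have : slice φ ∘ₗ f.rTensor C = f ∘ₗ slice φ := by ext; simp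
  exact congr($this x)

lemma slice_lTensor (φ : D →ₗ[k] k) (f : C →ₗ[k] D) (x : V ⊗[k] C) :
    slice φ (f.lTensor V x) = slice (φ ∘ₗ f) x := by
  have : slice φ ∘ₗ f.lTensor V = slice (φ ∘ₗ f) := by ext; simp
  exact congr($this x)

lemma eq_zero_of_forall_slice_eq_zero {x : V ⊗[k] C}
    (h : ∀ φ : C →ₗ[k] k, slice φ x = 0) : x = 0 := by
  classical
  let b := Module.Basis.ofVectorSpace k C
  have coord (y : V ⊗[k] C) (i) :
      TensorProduct.equivFinsuppOfBasisRight (M := V) b y i = slice (b.coord i) y := by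
    induction y with
    | zero => simp
    | tmul v c => simp
    | add y z hy hz => simp only [map_add, Finsupp.add_apply, hy, hz]
  refine (TensorProduct.equivFinsuppOfBasisRight (M := V) b).injective (Finsupp.ext fun i => ?_)
  rw [map_zero, Finsupp.zero_apply, coord, h]

lemma ext_slice {x y : V ⊗[k] C} (h : ∀ φ : C →ₗ[k] k, slice φ x = slice φ y) : x = y :=
  sub_eq_zero.mp <| eq_zero_of_forall_slice_eq_zero fun φ => by rw [map_sub, h, sub_self]

lemma mem_range_rTensor_subtype_iff (U : Submodule k V) (x : V ⊗[k] C) :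
    x ∈ range (U.subtype.rTensor C) ↔ ∀ φ : C →ₗ[k] k, slice φ x ∈ U := by
  refine ⟨?_, fun h => ?_⟩
  · rintro ⟨y, rfl⟩ φ
    rw [slice_rTensor]
    exact (slice φ y).2
  · have exact_mkQ := rTensor_exact C (f := U.subtype) (g := U.mkQ)
      (by rw [LinearMap.exact_iff]; simp) (Submodule.mkQ_surjective U)
    rw [← LinearMap.exact_iff.mp exact_mkQ, mem_ker]
    refine eq_zero_of_forall_slice_eq_zero fun φ => ?_
    rw [slice_rTensor]
    simpa using h φ

end Slice

section DualAction

variable {C D : Type u} [AddCommGroup C] [Module k C] [AddCommGroup D] [Module k D]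
  {V W X : Type u} [AddCommGroup V] [Module k V] [AddCommGroup W] [Module k W]
  [AddCommGroup X] [Module k X]
  {ρV : V →ₗ[k] V ⊗[k] C} {ρW : W →ₗ[k] W ⊗[k] C} {ρX : X →ₗ[k] X ⊗[k] C}

/-- The action `v ↦ v₀ φ(v₁)` of a functional `φ` on a comodule; for varying `φ` this makes a right
`C`-comodule a left module over the convolution algebra `C*`. -/
noncomputable def dualAct (ρ : V →ₗ[k] V ⊗[k] C) (φ : C →ₗ[k] k) : V →ₗ[k] V :=
  slice φ ∘ₗ ρ

lemma isSubcomod_iff_dualAct {U : Submodule k V} :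
    IsSubcomod k C ρV U ↔ ∀ φ, ∀ u ∈ U, dualAct ρV φ u ∈ U := by
  simp only [IsSubcomod, mem_range_rTensor_subtype_iff]
  exact ⟨fun h φ u hu => h u hu φ, fun h u hu φ => h φ u hu⟩

lemma isComodHom_iff_dualAct {f : V →ₗ[k] W} :
    IsComodHom k C ρV ρW f ↔ ∀ φ v, dualAct ρW φ (f v) = f (dualAct ρV φ v) := by
  simp only [dualAct, LinearMap.comp_apply, ← slice_rTensor]
  exact ⟨fun h φ v => congr(slice φ ($h v)),
    fun h => LinearMap.ext fun v => ext_slice fun φ => h φ v⟩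

lemma IsComodHom.comp {f : V →ₗ[k] W} {g : W →ₗ[k] X} (hg : IsComodHom k C ρW ρX g)
    (hf : IsComodHom k C ρV ρW f) : IsComodHom k C ρV ρX (g ∘ₗ f) := by
  rw [isComodHom_iff_dualAct] at *
  intro φ v
  simp only [LinearMap.comp_apply, hg, hf]

lemma IsComodHom.sub {f g : V →ₗ[k] W} (hf : IsComodHom k C ρV ρW f)
    (hg : IsComodHom k C ρV ρW g) : IsComodHom k C ρV ρW (f - g) := by
  rw [isComodHom_iff_dualAct] at *
  intro φ v
  simp only [LinearMap.sub_apply, map_sub, hf, hg]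

lemma IsSubcomod.exists_coaction {U : Submodule k V} (hU : IsSubcomod k C ρV U) :
    ∃ ρU : U →ₗ[k] U ⊗[k] C, IsComodHom k C ρU ρV U.subtype := by
  let e := LinearEquiv.ofInjective (U.subtype.rTensor C)
    (Module.Flat.rTensor_preserves_injective_linearMap _ U.injective_subtype)
  refine ⟨e.symm ∘ₗ (ρV ∘ₗ U.subtype).codRestrict _ fun u => hU u u.2, LinearMap.ext fun u => ?_⟩
  exact congr(($(e.apply_symm_apply ⟨ρV u, hU u u.2⟩) : V ⊗[k] C)).symm

lemma dualAct_cores (π : C →ₗ[k] D) (φ : D →ₗ[k] k) :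
    dualAct (cores k C π ρV) φ = dualAct ρV (φ ∘ₗ π) :=
  LinearMap.ext fun v => slice_lTensor φ π (ρV v)

lemma IsComodHom.cores {f : V →ₗ[k] W} (hf : IsComodHom k C ρV ρW f) (π : C →ₗ[k] D) :
    IsComodHom k D (cores k C π ρV) (cores k C π ρW) f := by
  rw [isComodHom_iff_dualAct] at *
  simp only [dualAct_cores]
  exact fun φ => hf (φ ∘ₗ π)

variable [Coalgebra k C] [Coalgebra k D]

lemma isComod_iff_dualAct :
    IsComod k C ρV ↔
      (∀ φ ψ v, dualAct ρV φ (dualAct ρV ψ v) = dualAct ρV (toConv φ * toConv ψ).ofConv v) ∧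
        ∀ v, dualAct ρV counit v = v := by
  have slice_slice_rTensor (φ ψ v) :
      slice φ (slice ψ (ρV.rTensor C (ρV v))) = dualAct ρV φ (dualAct ρV ψ v) := by
    rw [slice_rTensor]
    rfl
  have slice_slice_comul (φ ψ : C →ₗ[k] k) (x : V ⊗[k] C) :
      slice φ (slice ψ ((TensorProduct.assoc k V C C).symm (comul.lTensor V x))) =
        slice (toConv φ * toConv ψ).ofConv x := by
    have slice_slice_assoc : slice φ ∘ₗ slice ψ ∘ₗ (TensorProduct.assoc k V C C).symm.toLinearMap =
        slice (mul' k k ∘ₗ TensorProduct.map φ ψ) := by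
      ext
      simp [smul_smul, mul_comm]
    rw [LinearMap.convMul_def, ofConv_toConv, ← LinearMap.comp_assoc, ← slice_lTensor]
    exact congr($slice_slice_assoc (comul.lTensor V x))
  constructor
  · intro h
    refine ⟨fun φ ψ v => ?_, h.counit⟩
    rw [← slice_slice_rTensor, h.coassoc]
    exact slice_slice_comul φ ψ (ρV v)
  · rintro ⟨dualAct_dualAct, dualAct_counit⟩
    refine ⟨fun v => ext_slice fun ψ => ext_slice fun φ => ?_, dualAct_counit⟩
    rw [slice_slice_rTensor, dualAct_dualAct]
    exact (slice_slice_comul φ ψ (ρV v)).symm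

lemma IsComod.of_injective {f : V →ₗ[k] W} (hW : IsComod k C ρW) (hf : IsComodHom k C ρV ρW f)
    (hinj : Function.Injective f) : IsComod k C ρV := by
  rw [isComodHom_iff_dualAct] at hf
  obtain ⟨dualAct_dualAct, dualAct_counit⟩ := isComod_iff_dualAct.mp hW
  refine isComod_iff_dualAct.mpr ⟨fun φ ψ v => hinj ?_, fun v => hinj ?_⟩
  · simp only [← hf, dualAct_dualAct]
  · rw [← hf, dualAct_counit]

lemma IsComod.cores {F : Type*} [FunLike F C D] [CoalgHomClass F k C D] (hV : IsComod k C ρV)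
    (π : F) : IsComod k D (cores k C (π : C →ₗ[k] D) ρV) := by
  rw [isComod_iff_dualAct] at *
  simp only [dualAct_cores, hV.1]
  refine ⟨fun φ ψ v => ?_, fun v => ?_⟩
  · exact congr(dualAct ρV $(LinearMap.convMul_comp_coalgHom_distrib _ _ (π : C →ₗc[k] D)) v).symm
  · rw [CoalgHomClass.counit_comp, hV.2]

lemma isComod_comul : IsComod k C (comul : C →ₗ[k] C ⊗[k] C) where
  coassoc c := by simp
  counit c := by simp

lemma coact_dualAct (hV : IsComod k C ρV) (φ : C →ₗ[k] k) (v : V) :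
    ρV (dualAct ρV φ v) = (dualAct comul φ).lTensor V (ρV v) := by
  refine ext_slice fun ψ => ?_
  have slice_dualAct : (ψ ∘ₗ dualAct comul φ) = (toConv ψ * toConv φ).ofConv := by
    ext c
    have slice_eq : ψ ∘ₗ slice φ = mul' k k ∘ₗ TensorProduct.map ψ φ := by
      ext
      simp [mul_comm]
    exact congr($slice_eq (comul c))
  rw [slice_lTensor, slice_dualAct]
  exact (isComod_iff_dualAct.mp hV).1 ψ φ v

end DualAction

section Semisimple

lemma exists_quasiInverse_of_isSemisimpleModule {R M N : Type*} [Ring R] [AddCommGroup M]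
    [Module R M] [AddCommGroup N] [Module R N] [IsSemisimpleModule R M] [IsSemisimpleModule R N]
    (f : M →ₗ[R] N) : ∃ g : N →ₗ[R] M, f ∘ₗ g ∘ₗ f = f := by
  obtain ⟨s, hs⟩ := IsSemisimpleModule.lifting_property f.rangeRestrict
    f.surjective_rangeRestrict LinearMap.id
  obtain ⟨r, hr⟩ := IsSemisimpleModule.extension_property (range f).subtype
    (range f).injective_subtype LinearMap.id
  refine ⟨s ∘ₗ r, LinearMap.ext fun v => ?_⟩
  calc f (s (r (f v))) = r (f v) := congr(($hs (r (f v)) : N))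
    _ = f v := congr(($hr (f.rangeRestrict v) : N))

variable {C : Type u} [AddCommGroup C] [Module k C] [Coalgebra k C]
  {V W : Type u} [AddCommGroup V] [Module k V] [AddCommGroup W] [Module k W]
  {ρV : V →ₗ[k] V ⊗[k] C} {ρW : W →ₗ[k] W ⊗[k] C}

/-- A synonym of the space of a right `C`-comodule, carrying the left module structure over the
convolution algebra `C*` given by `dualAct`. -/
def IsComod.AsModule (_ : IsComod k C ρV) : Type u := V

namespace IsComod

variable (hV : IsComod k C ρV) (hW : IsComod k C ρW)

instance : AddCommGroup hV.AsModule := inferInstanceAs (AddCommGroup V)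

instance : Module k hV.AsModule := inferInstanceAs (Module k V)

noncomputable instance : SMul (WithConv (C →ₗ[k] k)) hV.AsModule where
  smul φ v := dualAct ρV φ.ofConv v

noncomputable instance : Module (WithConv (C →ₗ[k] k)) hV.AsModule :=
  Module.ofMinimalAxioms (fun φ => map_add (dualAct ρV φ.ofConv))
    (fun φ ψ v => slice_add φ.ofConv ψ.ofConv (ρV v))
    (fun φ ψ v => ((isComod_iff_dualAct.mp hV).1 φ.ofConv ψ.ofConv v).symm)
    (isComod_iff_dualAct.mp hV).2

instance : IsScalarTower k (WithConv (C →ₗ[k] k)) hV.AsModule where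
  smul_assoc c φ v := slice_smul c φ.ofConv (ρV v)

/-- A subcomodule, as a submodule over the convolution algebra. -/
def submodule {U : Submodule k V} (hU : IsSubcomod k C ρV U) :
    Submodule (WithConv (C →ₗ[k] k)) hV.AsModule :=
  { U with smul_mem' := fun φ v => isSubcomod_iff_dualAct.mp hU φ.ofConv v }

lemma isSubcomod_restrictScalars (N : Submodule (WithConv (C →ₗ[k] k)) hV.AsModule) :
    IsSubcomod k C ρV (N.restrictScalars k) :=
  isSubcomod_iff_dualAct.mpr fun φ _ => N.smul_mem (toConv φ)

lemma isAtom_submodule {U : Submodule k V} (hU : IsSimpleSubcomod k C ρV U) :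
    IsAtom (hV.submodule hU.1) := by
  refine ⟨fun h => hU.2.1 ?_, fun N hN => ?_⟩
  · exact (Submodule.eq_bot_iff U).mpr ((Submodule.eq_bot_iff (hV.submodule hU.1)).mp h)
  · rcases hU.2.2 _ hN.le (hV.isSubcomod_restrictScalars N) with h | h
    · exact (Submodule.eq_bot_iff N).mpr ((Submodule.eq_bot_iff (N.restrictScalars k)).mp h)
    · exact absurd (SetLike.ext fun v => SetLike.ext_iff.mp h v : N = hV.submodule hU.1) hN.ne

lemma isSemisimpleModule (hC : IsCosemisimple k C) :
    IsSemisimpleModule (WithConv (C →ₗ[k] k)) hV.AsModule := by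
  obtain ⟨_, U, hU, -, hsup⟩ := hC V ρV hV
  refine .of_sSup_simples_eq_top ?_
  simp_rw [isSimpleModule_iff_isAtom]
  have iSup_le_sSup : ⨆ i, U i ≤
      (sSup {N | IsAtom N} : Submodule (WithConv (C →ₗ[k] k)) hV.AsModule).restrictScalars k :=
    iSup_le fun i => show hV.submodule (hU i).1 ≤ _ from le_sSup (hV.isAtom_submodule (hU i))
  exact top_unique fun v _ => iSup_le_sSup (hsup ▸ Submodule.mem_top)

end IsComod

lemma IsComodHom.exists_quasiInverse {f : V →ₗ[k] W} (hf : IsComodHom k C ρV ρW f)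
    (hC : IsCosemisimple k C) (hV : IsComod k C ρV) (hW : IsComod k C ρW) :
    ∃ g : W →ₗ[k] V, IsComodHom k C ρW ρV g ∧ f ∘ₗ g ∘ₗ f = f := by
  have := hV.isSemisimpleModule hC
  have := hW.isSemisimpleModule hC
  let F : hV.AsModule →ₗ[WithConv (C →ₗ[k] k)] hW.AsModule :=
    { f with map_smul' := fun φ v => (isComodHom_iff_dualAct.mp hf φ.ofConv v).symm }
  obtain ⟨G, hG⟩ := exists_quasiInverse_of_isSemisimpleModule F
  refine ⟨G.restrictScalars k, isComodHom_iff_dualAct.mpr fun φ w => ?_,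
    LinearMap.ext fun v => congr($hG v)⟩
  exact (G.map_smul (toConv φ) w).symm

end Semisimple

section Constituents

variable {C : Type u} [AddCommGroup C] [Module k C]
  {T V W : Type u} [AddCommGroup T] [Module k T] [AddCommGroup V] [Module k V]
  [AddCommGroup W] [Module k W]
  {ρT : T →ₗ[k] T ⊗[k] C} {ρV : V →ₗ[k] V ⊗[k] C} {ρW : W →ₗ[k] W ⊗[k] C}

lemma IsSimpleComod.nontrivial (hV : IsSimpleComod k C ρV) : Nontrivial V :=
  (Submodule.nontrivial_iff k).mp ⟨⟨⊤, ⊥, hV.2.1⟩⟩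

lemma IsSimpleComod.injective (hV : IsSimpleComod k C ρV) {f : V →ₗ[k] W}
    (hf : IsComodHom k C ρV ρW f) (hf0 : f ≠ 0) : Function.Injective f := by
  have isSubcomod_ker : IsSubcomod k C ρV (ker f) := isSubcomod_iff_dualAct.mpr fun φ v hv => by
    rw [mem_ker, ← isComodHom_iff_dualAct.mp hf, mem_ker.mp hv, map_zero]
  rcases hV.2.2 (ker f) le_top isSubcomod_ker with h | h
  · exact ker_eq_bot.mp h
  · exact absurd (ker_eq_top.mp h) hf0

lemma IsSimpleSubcomod.isSimpleComod {U : Submodule k V} {ρU : U →ₗ[k] U ⊗[k] C}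
    (hU : IsSimpleSubcomod k C ρV U) (hρU : IsComodHom k C ρU ρV U.subtype) :
    IsSimpleComod k C ρU := by
  refine ⟨isSubcomod_iff_dualAct.mpr fun _ _ _ => trivial, ?_, fun N _ hN => ?_⟩
  · exact fun h => hU.2.1 ((Submodule.subsingleton_iff_eq_bot).mp
      ((Submodule.subsingleton_iff k).mp (subsingleton_of_bot_eq_top h.symm)))
  · have isSubcomod_map : IsSubcomod k C ρV (N.map U.subtype) := by
      rw [isSubcomod_iff_dualAct] at hN ⊢
      rintro φ _ ⟨u, hu, rfl⟩
      exact ⟨dualAct ρU φ u, hN φ u hu, (isComodHom_iff_dualAct.mp hρU φ u).symm⟩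
    have map_injective := Submodule.map_injective_of_injective U.injective_subtype
    refine (hU.2.2 _ (U.map_subtype_le N) isSubcomod_map).imp (fun h => map_injective ?_)
      fun h => map_injective ?_
    · rw [h, Submodule.map_bot]
    · rw [h, Submodule.map_subtype_top]

lemma IsConstituent.refl [Nontrivial V] : IsConstituent k C ρV ρV :=
  ⟨LinearMap.id, one_ne_zero (α := Module.End k V), isComodHom_iff_dualAct.mpr fun _ _ => rfl⟩

variable [Coalgebra k C]

lemma IsConstituent.symm (hC : IsCosemisimple k C) (hV : IsComod k C ρV) (hW : IsComod k C ρW)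
    (h : IsConstituent k C ρV ρW) : IsConstituent k C ρW ρV := by
  obtain ⟨f, hf0, hf⟩ := h
  obtain ⟨g, hg, hfgf⟩ := hf.exists_quasiInverse hC hV hW
  exact ⟨g, fun hg0 => hf0 (by rw [← hfgf, hg0, zero_comp, comp_zero]), hg⟩

lemma IsConstituent.of_common_simple (hC : IsCosemisimple k C) (hT : IsComod k C ρT)
    (hTs : IsSimpleComod k C ρT) (hV : IsComod k C ρV) (hTV : IsConstituent k C ρT ρV)
    (hTW : IsConstituent k C ρT ρW) : IsConstituent k C ρV ρW := by
  obtain ⟨i, hi0, hi⟩ := hTV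
  obtain ⟨j, hj0, hj⟩ := hTW
  obtain ⟨r, hr, hiri⟩ := hi.exists_quasiInverse hC hT hV
  have leftInverse : r ∘ₗ i = LinearMap.id :=
    LinearMap.ext fun t => hTs.injective hi hi0 congr($hiri t)
  refine ⟨j ∘ₗ r, fun h => hj0 ?_, hj.comp hr⟩
  rw [← comp_id j, ← leftInverse, ← comp_assoc, h, zero_comp]

lemma IsComod.exists_simple_constituent [Nontrivial V] (hC : IsCosemisimple k C)
    (hV : IsComod k C ρV) : ∃ T : SimpleComodule k C, IsConstituent k C T.ρ ρV := by
  obtain ⟨I, U, hU, -, hsup⟩ := hC V ρV hV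
  have : Nonempty I := not_isEmpty_iff.mp fun _ => bot_ne_top ((iSup_of_empty U).symm.trans hsup)
  obtain ⟨i⟩ := this
  obtain ⟨ρU, hρU⟩ := (hU i).1.exists_coaction
  refine ⟨⟨U i, ρU, hV.of_injective hρU (U i).injective_subtype, (hU i).isSimpleComod hρU⟩,
    (U i).subtype, fun h => (hU i).2.1 ?_, hρU⟩
  rw [← Submodule.range_subtype (U i), h, range_zero]

lemma IsConstituent.of_forall_simple_imp [Nontrivial V] (hC : IsCosemisimple k C)
    (hV : IsComod k C ρV)
    (h : ∀ T : SimpleComodule k C, IsConstituent k C T.ρ ρV → IsConstituent k C T.ρ ρW) :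
    IsConstituent k C ρV ρW := by
  obtain ⟨T, hT⟩ := hV.exists_simple_constituent hC
  exact .of_common_simple hC T.isComod T.isSimple hV hT (h T hT)

end Constituents

section LeftSlice

variable {C V : Type u} [AddCommGroup C] [Module k C] [AddCommGroup V] [Module k V]

/-- The slice map `φ ⊗ id : C ⊗ V → V` of a functional `φ` on `C`. -/
noncomputable def leftSlice (φ : C →ₗ[k] k) : C ⊗[k] V →ₗ[k] V :=
  (TensorProduct.lid k V).toLinearMap ∘ₗ φ.rTensor V

@[simp]
lemma leftSlice_tmul (φ : C →ₗ[k] k) (c : C) (v : V) : leftSlice φ (c ⊗ₜ[k] v) = φ c • v := by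
  simp [leftSlice]

variable {A H : Type u} [AddCommGroup A] [Module k A] [Coalgebra k A] [AddCommGroup H] [Module k H]
  [Coalgebra k H]

lemma counit_dualAct_comul (φ : H →ₗ[k] k) (h : H) : counit (R := k) (dualAct comul φ h) = φ h := by
  have counit_slice : counit ∘ₗ slice φ = φ ∘ₗ leftSlice (counit (R := k) (A := H)) := by
    ext
    simp [mul_comm]
  have := congr($counit_slice (comul h))
  simpa [leftSlice, dualAct] using this

lemma counit_leftSlice_comul (η : H →ₗ[k] k) (h : H) :
    counit (R := k) (leftSlice η (comul (R := k) h)) = η h := by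
  have counit_leftSlice : counit ∘ₗ leftSlice η = η ∘ₗ slice (counit (R := k) (A := H)) := by
    ext
    simp [mul_comm]
  have := congr($counit_leftSlice (comul h))
  simpa [slice] using this

lemma isComodHom_leftSlice_comul (η : H →ₗ[k] k) :
    IsComodHom k H comul comul (leftSlice η ∘ₗ comul (R := k)) := by
  have comul_leftSlice : comul ∘ₗ leftSlice η =
      leftSlice (k := k) (V := H ⊗[k] H) η ∘ₗ comul.lTensor H := by
    ext x y
    simp
  have rTensor_leftSlice : (leftSlice η).rTensor H = leftSlice (k := k) (V := H ⊗[k] H) η ∘ₗ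
      (TensorProduct.assoc k H H H).toLinearMap := by
    ext
    simp [TensorProduct.smul_tmul']
  refine LinearMap.ext fun h => ?_
  calc comul (leftSlice η (comul h)) = leftSlice η (comul.lTensor H (comul (R := k) h)) :=
        congr($comul_leftSlice (comul h))
    _ = leftSlice η (TensorProduct.assoc k H H H (comul.rTensor H (comul h))) := by
        rw [coassoc_apply]
    _ = (leftSlice η).rTensor H (comul.rTensor H (comul h)) :=
        congr($rTensor_leftSlice (comul.rTensor H (comul h))).symm
    _ = _ := by rw [← rTensor_comp_apply]; rfl

lemma IsComodHom.leftSlice_counit_comul {q : H →ₗ[k] H} (hq : IsComodHom k H comul comul q)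
    (h : H) : leftSlice (counit ∘ₗ q) (comul (R := k) h) = q h := by
  have comul_q : comul (q h) = q.rTensor H (comul (R := k) h) := congr($hq h)
  have := congrArg (leftSlice (counit (R := k))) comul_q
  simpa [leftSlice, rTensor_comp_apply] using this.symm

variable {F : Type*} [FunLike F A H] [CoalgHomClass F k A H] (ι : F)

lemma isComodHom_coalgHom :
    IsComodHom k H (cores k A (ι : A →ₗ[k] H) comul) comul (ι : A →ₗ[k] H) := by
  rw [IsComodHom, ← CoalgHomClass.map_comp_comul, cores, ← comp_assoc, rTensor_comp_lTensor]

lemma mem_range_iff_dualAct_eq_zero (h : H) :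
    h ∈ range (ι : A →ₗ[k] H) ↔
      ∀ φ : H →ₗ[k] k, φ ∘ₗ (ι : A →ₗ[k] H) = 0 → dualAct comul φ h = 0 := by
  constructor
  · rintro ⟨a, rfl⟩ φ hφ
    rw [isComodHom_iff_dualAct.mp (isComodHom_coalgHom ι), dualAct_cores, hφ]
    simp [dualAct, slice]
  · intro hh
    by_contra notMem
    obtain ⟨φ, hφ, range_le⟩ := Submodule.exists_le_ker_of_notMem notMem
    exact hφ (by rw [← counit_dualAct_comul, hh φ (range_le_ker_iff.mp range_le), map_zero])

lemma IsComodHom.apply_mem_range {q : H →ₗ[k] H} (hq : IsComodHom k H comul comul q) {h : H}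
    (hh : h ∈ range (ι : A →ₗ[k] H)) : q h ∈ range (ι : A →ₗ[k] H) := by
  rw [mem_range_iff_dualAct_eq_zero] at hh ⊢
  intro φ hφ
  rw [isComodHom_iff_dualAct.mp hq, hh φ hφ, map_zero]

lemma IsComodHom.comp_eq_self_of_range_le {q : H →ₗ[k] H} (hq : IsComodHom k H comul comul q)
    (hq_range : ∀ h, q h ∈ range (ι : A →ₗ[k] H)) (hH : IsCosemisimple k H) {r : H →ₗ[k] A}
    (hr : IsComodHom k H comul (QG.cores k A (ι : A →ₗ[k] H) comul) r)
    (hιr : (ι : A →ₗ[k] H) ∘ₗ r ∘ₗ (ι : A →ₗ[k] H) = (ι : A →ₗ[k] H)) :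
    q ∘ₗ (ι : A →ₗ[k] H) ∘ₗ r = q := by
  let f : H →ₗ[k] H := q - q ∘ₗ (ι : A →ₗ[k] H) ∘ₗ r
  have hf : IsComodHom k H comul comul f :=
    hq.sub (hq.comp ((isComodHom_coalgHom ι).comp hr))
  have apply_range (h) (hh : h ∈ range (ι : A →ₗ[k] H)) : f h = 0 := by
    obtain ⟨a, rfl⟩ := hh
    exact sub_eq_zero.mpr congr(q ($hιr a)).symm
  obtain ⟨g, hg, hfgf⟩ := hf.exists_quasiInverse hH isComod_comul isComod_comul
  refine (sub_eq_zero.mp <| LinearMap.ext fun h => ?_).symm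
  have f_mem : f h ∈ range (ι : A →ₗ[k] H) :=
    sub_mem (hq_range _) (hq_range _)
  calc f h = f (g (f h)) := congr($hfgf h).symm
    _ = 0 := apply_range _ (hg.apply_mem_range ι f_mem)

end LeftSlice

section Convolution

variable {C H M : Type u} [AddCommGroup C] [Module k C] [Coalgebra k C] [Ring H] [HopfAlgebra k H]
  [Ring M] [Algebra k M]

lemma toConv_comp_antipode_mul (κ : H →ₐ[k] M) :
    toConv (κ.toLinearMap ∘ₗ HopfAlgebra.antipode k) * toConv κ.toLinearMap = 1 := by
  have := algHom_comp_convMul_distrib κ (toConv (HopfAlgebra.antipode k)) (toConv LinearMap.id)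
  rw [antipode_mul_id] at this
  refine WithConv.ext (this.symm.trans ?_)
  ext
  simp

lemma toConv_mul_comp_antipode (κ : H →ₐ[k] M) :
    toConv κ.toLinearMap * toConv (κ.toLinearMap ∘ₗ HopfAlgebra.antipode k) = 1 := by
  have := algHom_comp_convMul_distrib κ (toConv LinearMap.id) (toConv (HopfAlgebra.antipode k))
  rw [id_mul_antipode] at this
  refine WithConv.ext (this.symm.trans ?_)
  ext
  simp

lemma convMul_apply_mem {K : Subalgebra k M} {f g : C →ₗ[k] M} (hf : ∀ c, f c ∈ K)
    (hg : ∀ c, g c ∈ K) (c : C) : (toConv f * toConv g).ofConv c ∈ K := by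
  rw [(ℛ k c).convMul_apply]
  exact sum_mem fun i _ => mul_mem (hf _) (hg _)

end Convolution

section CounitExtension

lemma leftSlice_comp_mulRight_mul {H M : Type u} [Ring H] [Algebra k H] [Ring M] [Algebra k M]
    (η : H →ₗ[k] k) (z : H ⊗[k] M) (x : H) (y : M) :
    leftSlice (η ∘ₗ mulRight k x) z * y = leftSlice η (z * x ⊗ₜ y) := by
  induction z with
  | zero => simp
  | tmul => simp
  | add z w hz hw => simp only [add_mul, map_add, hz, hw]

variable {A H : Type u} [Ring A] [HopfAlgebra k A] [Ring H] [Bialgebra k H] (ι : A →ₐc[k] H)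

lemma leftSlice_comp_mulRight_comul_mem_range {η : H →ₗ[k] k}
    (hη : ∀ h, leftSlice η (comul (R := k) h) ∈ range (ι : A →ₗ[k] H)) (h : H) (a : A) :
    leftSlice (η ∘ₗ mulRight k (ι a)) (comul (R := k) h) ∈ range (ι : A →ₗ[k] H) := by
  let f : A →ₗ[k] H := (leftSlice η ∘ₗ mulLeft k (comul (R := k) h)) ∘ₗ (mk k H H).flip 1 ∘ₗ ι
  let g : A →ₗ[k] H := (leftSlice η ∘ₗ comul) ∘ₗ mulLeft k h ∘ₗ ι
  let ι' : A →ₐ[k] H := ι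
  have f_apply (b : A) : leftSlice (η ∘ₗ mulRight k (ι b)) (comul (R := k) h) = f b := by
    exact (mul_one _).symm.trans (leftSlice_comp_mulRight_mul η (comul h) (ι b) 1)
  have f_conv : toConv f * toConv ι'.toLinearMap = toConv g := by
    ext b
    rw [(ℛ k b).convMul_apply]
    calc ∑ i ∈ (ℛ k b).index, f ((ℛ k b).left i) * ι ((ℛ k b).right i)
        = leftSlice η (comul h * ∑ i ∈ (ℛ k b).index,
            ι ((ℛ k b).left i) ⊗ₜ[k] ι ((ℛ k b).right i)) := by
          simp only [← f_apply, leftSlice_comp_mulRight_mul, Finset.mul_sum, map_sum]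
      _ = leftSlice η (comul (h * ι b)) := by
          rw [Bialgebra.comul_mul, ← CoalgHomClass.map_comp_comul_apply, ← (ℛ k b).eq, map_sum]
          rfl
  have f_eq : toConv f = toConv g * toConv (ι'.toLinearMap ∘ₗ HopfAlgebra.antipode k) := by
    rw [← f_conv, mul_assoc, toConv_mul_comp_antipode, mul_one]
  rw [f_apply, ← ofConv_toConv f, f_eq]
  have g_mem (b) : g b ∈ ι'.range := let ⟨c, hc⟩ := hη (h * ι b); ⟨c, hc⟩
  obtain ⟨c, hc⟩ := convMul_apply_mem (g := ι'.toLinearMap ∘ₗ HopfAlgebra.antipode k) g_mem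
    (fun b => ι'.mem_range_self (HopfAlgebra.antipode k b)) a
  exact ⟨c, hc⟩

lemma exists_linear_extension_counit (hH : IsCosemisimple k H) :
    ∃ e : H →ₗ[k] k, (∀ h, leftSlice e (comul (R := k) h) ∈ range (ι : A →ₗ[k] H)) ∧ e 1 = 1 ∧
      ∀ h a, e (h * ι a) = e h * counit (R := k) a := by
  obtain ⟨r, hr, hιr⟩ := (isComodHom_coalgHom ι).exists_quasiInverse hH (isComod_comul.cores ι)
    isComod_comul
  let P : H →ₗ[k] H := (ι : A →ₗ[k] H) ∘ₗ r
  have hP : IsComodHom k H comul comul P := (isComodHom_coalgHom ι).comp hr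
  have P_ι (a) : P (ι a) = ι a := congr($hιr a)
  let e : H →ₗ[k] k := counit ∘ₗ P
  have e_ι (a) : e (ι a) = counit (R := k) a := by
    rw [LinearMap.comp_apply, P_ι, CoalgHomClass.counit_comp_apply]
  have slice_e_mem (h) : leftSlice e (comul (R := k) h) ∈ range (ι : A →ₗ[k] H) :=
    ⟨r h, (hP.leftSlice_counit_comul h).symm⟩
  refine ⟨e, slice_e_mem, by rw [← map_one ι, e_ι, Bialgebra.counit_one], fun h a => ?_⟩
  let q : H →ₗ[k] H := leftSlice (e ∘ₗ mulRight k (ι a)) ∘ₗ comul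
  have q_P : q ∘ₗ P = q := (isComodHom_leftSlice_comul _).comp_eq_self_of_range_le ι
    (fun h => leftSlice_comp_mulRight_comul_mem_range ι slice_e_mem h a) hH hr hιr
  calc e (h * ι a) = counit (R := k) (q h) :=
        (counit_leftSlice_comul (e ∘ₗ mulRight k (ι a)) h).symm
    _ = counit (R := k) (q (P h)) := congr(counit (R := k) ($q_P h)).symm
    _ = e (ι (r h) * ι a) :=
        counit_leftSlice_comul (e ∘ₗ mulRight k (ι a)) (P h)
    _ = counit (R := k) (r h) * counit (R := k) a := by
        rw [← map_mul, e_ι, Bialgebra.counit_mul]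
    _ = e h * counit (R := k) a := by
        rw [← CoalgHomClass.counit_comp_apply ι (r h)]
        rfl

variable {B : Type u} [Ring B] [Bialgebra k B] (π : H →ₐc[k] B)

theorem quotientSpaceRight_le_range (hH : IsCosemisimple k H)
    (hB : ker (π : H →ₗ[k] B) ≤ leftIdealGen k (range (ι : A →ₗ[k] H) ⊓ ker (counit (R := k)))) :
    quotientSpaceRight k H (π : H →ₗ[k] B) ≤ range (ι : A →ₗ[k] H) := by
  obtain ⟨e, slice_e_mem, e_one, e_mul⟩ := exists_linear_extension_counit ι hH
  have ker_π_le : ker (π : H →ₗ[k] B) ≤ ker e := hB.trans <| Submodule.span_le.mpr <| by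
    rintro _ ⟨h, _, ⟨⟨a, rfl⟩, ha⟩, rfl⟩
    have counit_a : counit (R := k) a = 0 := (CoalgHomClass.counit_comp_apply ι a).symm.trans ha
    exact (e_mul h a).trans (by rw [counit_a, mul_zero])
  obtain ⟨ē, rfl⟩ : e ∈ range (π : H →ₗ[k] B).dualMap := by
    rw [range_dualMap_eq_dualAnnihilator_ker, Submodule.mem_dualAnnihilator]
    exact ker_π_le
  intro h hh
  have coinvariant : (π : H →ₗ[k] B).rTensor H (comul h) = 1 ⊗ₜ h := sub_eq_zero.mp hh
  have leftSlice_dualMap : leftSlice ((π : H →ₗ[k] B).dualMap ē) =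
      leftSlice ē ∘ₗ (π : H →ₗ[k] B).rTensor H := by
    ext
    simp
  have slice_eq : leftSlice ((π : H →ₗ[k] B).dualMap ē) (comul h) = h := by
    rw [leftSlice_dualMap, LinearMap.comp_apply, coinvariant, leftSlice_tmul, ← map_one π]
    exact (congrArg (· • h) e_one).trans (one_smul k h)
  exact slice_eq ▸ slice_e_mem h

end CounitExtension

section ConvAct

variable {C M N V W : Type u} [AddCommGroup C] [Module k C] [Ring M] [Algebra k M] [Ring N]
  [Algebra k N] [AddCommGroup V] [Module k V] [AddCommGroup W] [Module k W]
  {ρV : V →ₗ[k] V ⊗[k] C} {ρW : W →ₗ[k] W ⊗[k] C}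

/-- The operator `w ⊗ m ↦ w₀ ⊗ s(w₁) m` on `W ⊗ M` by which a linear map `s : C → M` acts, for a
right `C`-comodule `W` and an algebra `M`. -/
noncomputable def convAct (ρ : W →ₗ[k] W ⊗[k] C) (s : C →ₗ[k] M) : W ⊗[k] M →ₗ[k] W ⊗[k] M :=
  (mul' k M ∘ₗ s.rTensor M).lTensor W ∘ₗ (TensorProduct.assoc k W C M).toLinearMap ∘ₗ ρ.rTensor M

lemma convAct_tmul (s : C →ₗ[k] M) (w : W) (m : M) :
    convAct ρW s (w ⊗ₜ m) = (mulRight k m ∘ₗ s).lTensor W (ρW w) := by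
  have : ((mul' k M ∘ₗ s.rTensor M).lTensor W ∘ₗ (TensorProduct.assoc k W C M).toLinearMap) ∘ₗ
      (mk k (W ⊗[k] C) M).flip m = (mulRight k m ∘ₗ s).lTensor W := by
    ext
    simp
  exact congr($this (ρW w))

lemma lTensor_convAct (κ : M →ₐ[k] N) (s : C →ₗ[k] M) (x : W ⊗[k] M) :
    κ.toLinearMap.lTensor W (convAct ρW s x) =
      convAct ρW (κ.toLinearMap ∘ₗ s) (κ.toLinearMap.lTensor W x) := by
  have mulRight_κ (m : M) : κ.toLinearMap ∘ₗ mulRight k m = mulRight k (κ m) ∘ₗ κ.toLinearMap := by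
    ext
    simp
  induction x with
  | zero => simp only [map_zero]
  | tmul w m =>
    rw [convAct_tmul, lTensor_tmul, convAct_tmul, ← lTensor_comp_apply, ← comp_assoc, mulRight_κ]
    rfl
  | add x y hx hy => simp only [map_add, hx, hy]

lemma IsComodHom.rTensor_convAct {f : V →ₗ[k] W} (hf : IsComodHom k C ρV ρW f) (s : C →ₗ[k] M)
    (x : V ⊗[k] M) : f.rTensor M (convAct ρV s x) = convAct ρW s (f.rTensor M x) := by
  induction x with
  | zero => simp only [map_zero]
  | tmul v m =>
    have coact_f : ρW (f v) = f.rTensor C (ρV v) := congr($hf v)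
    rw [convAct_tmul, rTensor_tmul, convAct_tmul, coact_f]
    exact congr($((rTensor_comp_lTensor _ _ _).trans (lTensor_comp_rTensor _ _ _).symm) (ρV v))
  | add x y hx hy => simp only [map_add, hx, hy]

lemma convAct_cores {D : Type u} [AddCommGroup D] [Module k D] (π : C →ₗ[k] D) (s : D →ₗ[k] M) :
    convAct (cores k C π ρW) s = convAct ρW (s ∘ₗ π) := by
  ext w m
  simp [convAct_tmul, cores, ← lTensor_comp_apply, comp_assoc]

lemma assoc_rTensor_convAct (s : C →ₗ[k] M) (x : (W ⊗[k] M) ⊗[k] N) :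
    TensorProduct.assoc k W M N ((convAct ρW s).rTensor N x) =
      convAct ρW (Algebra.TensorProduct.includeLeft (S := k).toLinearMap ∘ₗ s)
        (TensorProduct.assoc k W M N x) := by
  have assoc_mulRight (m : M) (n : N) : (TensorProduct.assoc k W M N).toLinearMap ∘ₗ
      (mk k (W ⊗[k] M) N).flip n ∘ₗ (mulRight k m ∘ₗ s).lTensor W =
      (mulRight k (m ⊗ₜ[k] n) ∘ₗ
        Algebra.TensorProduct.includeLeft (S := k).toLinearMap ∘ₗ s).lTensor W := by
    ext
    simp
  have : (TensorProduct.assoc k W M N).toLinearMap ∘ₗ (convAct ρW s).rTensor N =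
      convAct ρW (Algebra.TensorProduct.includeLeft (S := k).toLinearMap ∘ₗ s) ∘ₗ
        (TensorProduct.assoc k W M N).toLinearMap := by
    ext w m n
    simpa [convAct_tmul] using congr($(assoc_mulRight m n) (ρW w))
  exact congr($this x)

variable [Coalgebra k C]

lemma IsComod.convAct_lTensor_coact (hW : IsComod k C ρW) (s t : C →ₗ[k] M) (w : W) :
    convAct ρW s (t.lTensor W (ρW w)) = (toConv s * toConv t).ofConv.lTensor W (ρW w) := by
  have convAct_comp_lTensor : convAct ρW s ∘ₗ t.lTensor W =
      (mul' k M ∘ₗ TensorProduct.map s t).lTensor W ∘ₗ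
        (TensorProduct.assoc k W C C).toLinearMap ∘ₗ ρW.rTensor C := by
    have assoc_lTensor : (mul' k M ∘ₗ s.rTensor M).lTensor W ∘ₗ
        (TensorProduct.assoc k W C M).toLinearMap ∘ₗ t.lTensor (W ⊗[k] C) =
        (mul' k M ∘ₗ TensorProduct.map s t).lTensor W ∘ₗ
          (TensorProduct.assoc k W C C).toLinearMap := by
      ext
      simp
    rw [← comp_assoc, ← assoc_lTensor]
    simp only [convAct, comp_assoc, rTensor_comp_lTensor, lTensor_comp_rTensor]
  have coassoc : TensorProduct.assoc k W C C (ρW.rTensor C (ρW w)) = comul.lTensor W (ρW w) := by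
    rw [hW.coassoc]
    exact (TensorProduct.assoc k W C C).apply_symm_apply _
  calc _ = (mul' k M ∘ₗ TensorProduct.map s t).lTensor W
        (TensorProduct.assoc k W C C (ρW.rTensor C (ρW w))) := congr($convAct_comp_lTensor (ρW w))
    _ = _ := by
      rw [coassoc, ← lTensor_comp_apply]
      rfl

lemma IsComod.convAct_convAct (hW : IsComod k C ρW) (s t : C →ₗ[k] M) (x : W ⊗[k] M) :
    convAct ρW s (convAct ρW t x) = convAct ρW (toConv s * toConv t).ofConv x := by
  have mul_mulRight (m : M) : (toConv s * toConv (mulRight k m ∘ₗ t)).ofConv =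
      mulRight k m ∘ₗ (toConv s * toConv t).ofConv := by
    ext c
    simp [(ℛ k c).convMul_apply, mul_assoc]
  induction x with
  | zero => simp only [map_zero]
  | tmul w m => rw [convAct_tmul, hW.convAct_lTensor_coact, mul_mulRight, convAct_tmul]
  | add x y hx hy => simp only [map_add, hx, hy]

lemma IsComod.convAct_one (hW : IsComod k C ρW) (x : W ⊗[k] M) :
    convAct ρW (1 : WithConv (C →ₗ[k] M)).ofConv x = x := by
  have mulRight_one (m : M) : mulRight k m ∘ₗ (1 : WithConv (C →ₗ[k] M)).ofConv =
      toSpanSingleton k M m ∘ₗ Coalgebra.counit := by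
    ext c
    simp [Algebra.smul_def]
  have lTensor_toSpanSingleton (m : M) (y : W ⊗[k] k) :
      (toSpanSingleton k M m).lTensor W y = TensorProduct.rid k W y ⊗ₜ m := by
    induction y with
    | zero => simp
    | tmul => simp [TensorProduct.smul_tmul]
    | add y z hy hz => simp only [map_add, add_tmul, hy, hz]
  induction x with
  | zero => simp only [map_zero]
  | tmul w m =>
    rw [convAct_tmul, mulRight_one, lTensor_comp_apply, lTensor_toSpanSingleton, hW.counit]
  | add x y hx hy => simp only [map_add, hx, hy]

end ConvAct

section ConvActHopf

variable {H M W : Type u} [Ring H] [HopfAlgebra k H] [Ring M] [Algebra k M]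
  [AddCommGroup W] [Module k W] {ρ : W →ₗ[k] W ⊗[k] H}

lemma IsComod.convAct_algHom_injective (hW : IsComod k H ρ) (κ : H →ₐ[k] M) :
    Function.Injective (convAct ρ κ.toLinearMap) :=
  Function.LeftInverse.injective (g := convAct ρ (κ.toLinearMap ∘ₗ HopfAlgebra.antipode k))
    fun x => by rw [hW.convAct_convAct, toConv_comp_antipode_mul, hW.convAct_one]

lemma IsComod.convAct_id_convAct_antipode (hW : IsComod k H ρ) (x : W ⊗[k] H) :
    convAct ρ LinearMap.id (convAct ρ (HopfAlgebra.antipode k) x) = x := by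
  rw [hW.convAct_convAct, id_mul_antipode, hW.convAct_one]

end ConvActHopf

section TensorCoaction

open Algebra.TensorProduct (includeLeft includeRight)

variable {H W : Type u} [Ring H] [Bialgebra k H] [AddCommGroup W] [Module k W]
  {ρ : W →ₗ[k] W ⊗[k] H}

lemma comul_eq_convMul : (comul : H →ₗ[k] H ⊗[k] H) =
    (toConv (includeLeft (R := k) (S := k) (A := H) (B := H)).toLinearMap *
      toConv (includeRight (R := k) (A := H) (B := H)).toLinearMap).ofConv := by
  ext h
  rw [(ℛ k h).convMul_apply, ← (ℛ k h).eq]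
  simp

lemma assoc_tensorCoact_comul (x : W ⊗[k] H) :
    TensorProduct.assoc k W H H (tensorCoact k H ρ comul x) =
      convAct ρ (includeRight (R := k) (A := H) (B := H)).toLinearMap (comul.lTensor W x) := by
  have assoc_mul : (TensorProduct.assoc k W H H).toLinearMap ∘ₗ (mul' k H).lTensor (W ⊗[k] H) ∘ₗ
      (TensorProduct.tensorTensorTensorComm k W H H H).toLinearMap =
      (mul' k (H ⊗[k] H) ∘ₗ includeRight.toLinearMap.rTensor (H ⊗[k] H)).lTensor W ∘ₗ
        (TensorProduct.assoc k W H (H ⊗[k] H)).toLinearMap := by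
    ext
    simp
  have : (TensorProduct.assoc k W H H).toLinearMap ∘ₗ tensorCoact k H ρ comul =
      convAct ρ includeRight.toLinearMap ∘ₗ comul.lTensor W := by
    simpa only [tensorCoact, convAct, comp_assoc, rTensor_comp_lTensor] using
      congr($assoc_mul ∘ₗ TensorProduct.map ρ comul)
  exact congr($this x)

lemma assoc_rTensor_convAct_id_tensorCoact (hW : IsComod k H ρ) (x : W ⊗[k] H) :
    TensorProduct.assoc k W H H ((convAct ρ LinearMap.id).rTensor H (tensorCoact k H ρ comul x)) =
      comul.lTensor W (convAct ρ LinearMap.id x) := by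
  rw [assoc_rTensor_convAct, assoc_tensorCoact_comul, hW.convAct_convAct, comp_id,
    ← comul_eq_convMul]
  exact (lTensor_convAct (Bialgebra.comulAlgHom k H) LinearMap.id x).symm

lemma convAct_id_dualAct_tensorCoact (hW : IsComod k H ρ) (φ : H →ₗ[k] k) (x : W ⊗[k] H) :
    convAct ρ LinearMap.id (dualAct (tensorCoact k H ρ comul) φ x) =
      (dualAct comul φ).lTensor W (convAct ρ LinearMap.id x) := by
  have slice_eq (y : (W ⊗[k] H) ⊗[k] H) :
      slice φ y = (slice φ).lTensor W (TensorProduct.assoc k W H H y) := by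
    have : slice φ = (slice φ).lTensor W ∘ₗ (TensorProduct.assoc k W H H).toLinearMap := by
      ext
      simp
    exact congr($this y)
  rw [dualAct, LinearMap.comp_apply, ← slice_rTensor, slice_eq,
    assoc_rTensor_convAct_id_tensorCoact hW, ← lTensor_comp_apply]
  rfl

variable {B : Type u} [Ring B] [Bialgebra k B] (π : H →ₐc[k] B)

lemma assoc_cores_tensorCoact_tmul (w : W) {a : H}
    (ha : a ∈ quotientSpaceLeft k H (π : H →ₗ[k] B)) :
    TensorProduct.assoc k W H B (cores k H (π : H →ₗ[k] B) (tensorCoact k H ρ comul) (w ⊗ₜ a)) =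
      (mk k H B a).lTensor W (cores k H (π : H →ₗ[k] B) ρ w) := by
  have coinvariant : (π : H →ₗ[k] B).lTensor H (comul a) = a ⊗ₜ 1 := sub_eq_zero.mp ha
  have assoc_lTensor (y : (W ⊗[k] H) ⊗[k] H) :
      TensorProduct.assoc k W H B ((π : H →ₗ[k] B).lTensor (W ⊗[k] H) y) =
        ((π : H →ₗ[k] B).lTensor H).lTensor W (TensorProduct.assoc k W H H y) := by
    rw [lTensor_tensor]
    simp
  let idπ : H ⊗[k] H →ₐ[k] H ⊗[k] B := Algebra.TensorProduct.map (AlgHom.id k H) π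
  have idπ_eq : idπ.toLinearMap = (π : H →ₗ[k] B).lTensor H := rfl
  have mulRight_include : mulRight k (a ⊗ₜ[k] (1 : B)) ∘ₗ idπ.toLinearMap ∘ₗ
      (includeRight (R := k) (A := H) (B := H)).toLinearMap = mk k H B a ∘ₗ (π : H →ₗ[k] B) := by
    ext
    simp [idπ]
  rw [cores, LinearMap.comp_apply, assoc_lTensor, assoc_tensorCoact_comul, ← idπ_eq,
    lTensor_convAct, lTensor_tmul, lTensor_tmul, idπ_eq, coinvariant, convAct_tmul, ← idπ_eq,
    mulRight_include, lTensor_comp_apply]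
  rfl

lemma dualAct_cores_slice {D : Submodule k H} (hD : D ≤ quotientSpaceLeft k H (π : H →ₗ[k] B))
    {x : W ⊗[k] H} (hx : x ∈ range (D.subtype.lTensor W)) (ψ : H →ₗ[k] k) (φ : B →ₗ[k] k) :
    dualAct (cores k H (π : H →ₗ[k] B) ρ) φ (slice ψ x) =
      slice ψ (dualAct (cores k H (π : H →ₗ[k] B) (tensorCoact k H ρ comul)) φ x) := by
  have slice_slice_eq (y : (W ⊗[k] H) ⊗[k] B) : slice ψ (slice φ y) =
      slice φ ((leftSlice ψ).lTensor W (TensorProduct.assoc k W H B y)) := by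
    have : slice ψ ∘ₗ slice φ =
        slice φ ∘ₗ (leftSlice ψ).lTensor W ∘ₗ (TensorProduct.assoc k W H B).toLinearMap := by
      ext
      simp [smul_smul, mul_comm]
    exact congr($this y)
  obtain ⟨y, rfl⟩ := hx
  induction y with
  | zero => simp only [map_zero]
  | tmul w a =>
    have leftSlice_mk : leftSlice ψ ∘ₗ mk k H B a = ψ (a : H) • LinearMap.id := by
      ext
      simp
    rw [lTensor_tmul, Submodule.subtype_apply, dualAct, dualAct, LinearMap.comp_apply,
      LinearMap.comp_apply, slice_slice_eq, assoc_cores_tensorCoact_tmul π w (hD a.2),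
      ← lTensor_comp_apply, leftSlice_mk, slice_tmul, lTensor_smul, lTensor_id]
    simp
  | add y z hy hz => simp only [map_add, hy, hz]

end TensorCoaction

section EmbedsInTensor

variable {H B V W X : Type u} [Ring H] [Bialgebra k H] [Ring B] [Bialgebra k B] (π : H →ₐc[k] B)
  [AddCommGroup V] [Module k V] [AddCommGroup W] [Module k W] [AddCommGroup X] [Module k X]

/-- The comodule `V` embeds into the subspace `W ⊗ D` of the comodule `W ⊗ H` with its tensor
product coaction, for a subspace `D` of `H`. -/
def EmbedsInTensor (D : Submodule k H) (ρV : V →ₗ[k] V ⊗[k] H)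
    (ρW : W →ₗ[k] W ⊗[k] H) : Prop :=
  ∃ g : V →ₗ[k] W ⊗[k] H, Function.Injective g ∧ IsComodHom k H ρV (tensorCoact k H ρW comul) g ∧
    ∀ v, g v ∈ range (D.subtype.lTensor W)

lemma EmbedsInTensor.isConstituent_cores {D : Submodule k H} {ρV : V →ₗ[k] V ⊗[k] H}
    {ρW : W →ₗ[k] W ⊗[k] H} {ρX : X →ₗ[k] X ⊗[k] B}
    (hD : D ≤ quotientSpaceLeft k H (π : H →ₗ[k] B)) (h : EmbedsInTensor D ρV ρW)
    (hX : IsConstituent k B ρX (cores k H (π : H →ₗ[k] B) ρV)) :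
    IsConstituent k B ρX (cores k H (π : H →ₗ[k] B) ρW) := by
  obtain ⟨g, g_inj, hg, g_mem⟩ := h
  obtain ⟨t, t_ne_zero, ht⟩ := hX
  obtain ⟨x, tx_ne_zero⟩ : ∃ x, t x ≠ 0 := by
    by_contra! h
    exact t_ne_zero (LinearMap.ext h)
  obtain ⟨ψ, slice_ne_zero⟩ : ∃ ψ, slice ψ (g (t x)) ≠ 0 := by
    by_contra! h
    exact tx_ne_zero ((map_eq_zero_iff g g_inj).mp (eq_zero_of_forall_slice_eq_zero h))
  refine ⟨(slice ψ ∘ₗ g) ∘ₗ t, fun h => slice_ne_zero congr($h x), IsComodHom.comp ?_ ht⟩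
  have hg_cores := isComodHom_iff_dualAct.mp (hg.cores (π : H →ₗ[k] B))
  refine isComodHom_iff_dualAct.mpr fun φ v => ?_
  rw [LinearMap.comp_apply, dualAct_cores_slice π hD (g_mem v), hg_cores, LinearMap.comp_apply]

end EmbedsInTensor

section TwistedLift

open Algebra.TensorProduct (includeLeft includeRight)

variable {H B V W : Type u} [Ring H] [HopfAlgebra k H] [AddCommGroup V] [Module k V]
  [AddCommGroup W] [Module k W] {ρV : V →ₗ[k] V ⊗[k] H} {ρW : W →ₗ[k] W ⊗[k] H}

/-- The linear map `v ↦ f(v₀)₀ ⊗ S(f(v₀)₁) v₁`, the `H`-comodule map `V → W ⊗ H` which corresponds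
to `f : V → W` under the twist `W ⊗ H ≅ W_triv ⊗ H`. -/
noncomputable def twistedLift (ρV : V →ₗ[k] V ⊗[k] H) (ρW : W →ₗ[k] W ⊗[k] H) (f : V →ₗ[k] W) :
    V →ₗ[k] W ⊗[k] H :=
  convAct ρW (HopfAlgebra.antipode k) ∘ₗ f.rTensor H ∘ₗ ρV

lemma convAct_id_twistedLift (hW : IsComod k H ρW) (f : V →ₗ[k] W) (v : V) :
    convAct ρW LinearMap.id (twistedLift ρV ρW f v) = f.rTensor H (ρV v) :=
  hW.convAct_id_convAct_antipode _

lemma isComodHom_twistedLift (hV : IsComod k H ρV) (hW : IsComod k H ρW) (f : V →ₗ[k] W) :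
    IsComodHom k H ρV (tensorCoact k H ρW comul) (twistedLift ρV ρW f) := by
  refine isComodHom_iff_dualAct.mpr fun φ v => hW.convAct_algHom_injective (AlgHom.id k H) ?_
  calc convAct ρW LinearMap.id (dualAct (tensorCoact k H ρW comul) φ (twistedLift ρV ρW f v))
      = (dualAct comul φ).lTensor W (f.rTensor H (ρV v)) := by
        rw [convAct_id_dualAct_tensorCoact hW, convAct_id_twistedLift hW]
    _ = f.rTensor H ((dualAct comul φ).lTensor V (ρV v)) :=
        congr($((lTensor_comp_rTensor _ _ _).trans (rTensor_comp_lTensor _ _ _).symm) (ρV v))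
    _ = f.rTensor H (ρV (dualAct ρV φ v)) := by rw [coact_dualAct hV]
    _ = convAct ρW LinearMap.id (twistedLift ρV ρW f (dualAct ρV φ v)) :=
        (convAct_id_twistedLift hW f _).symm

lemma eq_zero_of_twistedLift_eq_zero (hV : IsComod k H ρV) (hW : IsComod k H ρW) {f : V →ₗ[k] W}
    (h : twistedLift ρV ρW f = 0) : f = 0 := by
  ext v
  have rTensor_eq_zero : f.rTensor H (ρV v) = 0 := by
    rw [← convAct_id_twistedLift hW, h, LinearMap.zero_apply, map_zero]
  calc f v = f (dualAct ρV counit v) := by rw [(isComod_iff_dualAct.mp hV).2]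
    _ = slice counit (f.rTensor H (ρV v)) := (slice_rTensor _ f _).symm
    _ = 0 := by rw [rTensor_eq_zero, map_zero]

variable [Ring B] [Bialgebra k B] (π : H →ₐc[k] B)

lemma lTensor_comul_twistedLift (hV : IsComod k H ρV) (hW : IsComod k H ρW) {f : V →ₗ[k] W}
    (hf : IsComodHom k B (cores k H (π : H →ₗ[k] B) ρV) (cores k H (π : H →ₗ[k] B) ρW) f) (v : V) :
    ((π : H →ₗ[k] B).rTensor H ∘ₗ comul).lTensor W (twistedLift ρV ρW f v) =
      (mk k B H 1).lTensor W (twistedLift ρV ρW f v) := by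
  let πid : H ⊗[k] H →ₐ[k] B ⊗[k] H := Algebra.TensorProduct.map π (AlgHom.id k H)
  let κ : H →ₐ[k] B ⊗[k] H := πid.comp (Bialgebra.comulAlgHom k H)
  let i : B →ₐ[k] B ⊗[k] H := includeLeft
  let j : H →ₐ[k] B ⊗[k] H := includeRight
  have κ_eq : κ.toLinearMap =
      (toConv (i.toLinearMap ∘ₗ (π : H →ₗ[k] B)) * toConv j.toLinearMap).ofConv := by
    ext h
    rw [(ℛ k h).convMul_apply]
    simp [κ, ← (ℛ k h).eq, πid, i, j]
  have convAct_lift (s : H →ₐ[k] B ⊗[k] H) : convAct ρW s.toLinearMap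
      (s.toLinearMap.lTensor W (twistedLift ρV ρW f v)) =
        f.rTensor (B ⊗[k] H) (s.toLinearMap.lTensor V (ρV v)) := by
    have := lTensor_convAct (ρW := ρW) s LinearMap.id (twistedLift ρV ρW f v)
    rw [comp_id, convAct_id_twistedLift hW] at this
    rw [← this]
    exact congr($((lTensor_comp_rTensor _ _ _).trans (rTensor_comp_lTensor _ _ _).symm) (ρV v))
  refine hW.convAct_algHom_injective κ ?_
  change convAct ρW κ.toLinearMap (κ.toLinearMap.lTensor W (twistedLift ρV ρW f v)) =
    convAct ρW κ.toLinearMap (j.toLinearMap.lTensor W (twistedLift ρV ρW f v))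
  calc convAct ρW κ.toLinearMap (κ.toLinearMap.lTensor W (twistedLift ρV ρW f v))
      = f.rTensor (B ⊗[k] H) (κ.toLinearMap.lTensor V (ρV v)) := convAct_lift κ
    _ = f.rTensor (B ⊗[k] H) (convAct ρV (i.toLinearMap ∘ₗ (π : H →ₗ[k] B))
          (j.toLinearMap.lTensor V (ρV v))) := by rw [κ_eq, hV.convAct_lTensor_coact]
    _ = convAct ρW (i.toLinearMap ∘ₗ (π : H →ₗ[k] B))
          (f.rTensor (B ⊗[k] H) (j.toLinearMap.lTensor V (ρV v))) := by
        simp only [← convAct_cores, hf.rTensor_convAct]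
    _ = convAct ρW κ.toLinearMap (j.toLinearMap.lTensor W (twistedLift ρV ρW f v)) := by
        rw [← convAct_lift, hW.convAct_convAct, κ_eq]

lemma twistedLift_mem_range (hV : IsComod k H ρV) (hW : IsComod k H ρW) {f : V →ₗ[k] W}
    (hf : IsComodHom k B (cores k H (π : H →ₗ[k] B) ρV) (cores k H (π : H →ₗ[k] B) ρW) f) (v : V) :
    twistedLift ρV ρW f v ∈
      range ((quotientSpaceRight k H (π : H →ₗ[k] B)).subtype.lTensor W) := by
  refine (Module.Flat.lTensor_exact W (exact_subtype_ker_map _) _).mp ?_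
  rw [lTensor_sub, LinearMap.sub_apply, lTensor_comul_twistedLift π hV hW hf, sub_self]

lemma range_lTensor_subtype_mono {M : Type u} [AddCommGroup M] [Module k M] {D E : Submodule k M}
    (h : D ≤ E) : range (D.subtype.lTensor W) ≤ range (E.subtype.lTensor W) := by
  rw [← Submodule.subtype_comp_inclusion D E h, lTensor_comp]
  exact range_comp_le_range _ _

lemma IsConstituent.embedsInTensor (hV : IsComod k H ρV) (hVs : IsSimpleComod k H ρV)
    (hW : IsComod k H ρW) {D : Submodule k H}
    (hD : quotientSpaceRight k H (π : H →ₗ[k] B) ≤ D)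
    (h : IsConstituent k B (cores k H (π : H →ₗ[k] B) ρV) (cores k H (π : H →ₗ[k] B) ρW)) :
    EmbedsInTensor D ρV ρW := by
  obtain ⟨f, f_ne_zero, hf⟩ := h
  have lift_ne_zero : twistedLift ρV ρW f ≠ 0 :=
    fun h => f_ne_zero (eq_zero_of_twistedLift_eq_zero hV hW h)
  have hlift := isComodHom_twistedLift hV hW f
  exact ⟨_, hVs.injective hlift lift_ne_zero, hlift, fun v =>
    range_lTensor_subtype_mono hD (twistedLift_mem_range π hV hW hf v)⟩

end TwistedLift

/-- The relation `V ∼_H W` on simple `H`-comodules attached to `π : H → B`, encoded as the existence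
of a nonzero `B`-comodule map. -/
def Linked {H B : Type u} [Ring H] [Bialgebra k H] [Ring B] [Bialgebra k B] (π : H →ₐc[k] B)
    (X Y : SimpleComodule k H) : Prop :=
  IsConstituent k B (cores k H (π : H →ₗ[k] B) X.ρ) (cores k H (π : H →ₗ[k] B) Y.ρ)

end QG

open QG in
theorem statement_9_general {k : Type u} [Field k]
    {A H B : Type u} [Ring A] [HopfAlgebra k A] [Ring H] [HopfAlgebra k H]
    [Ring B] [Bialgebra k B]
    (ι : A →ₐc[k] H) (π : H →ₐc[k] B)
    (hA : LinearMap.range (ι : A →ₗ[k] H) ≤ quotientSpaceLeft k H (π : H →ₗ[k] B))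
    (hB : LinearMap.ker (π : H →ₗ[k] B) ≤
      leftIdealGen k (LinearMap.range (ι : A →ₗ[k] H) ⊓
        LinearMap.ker (Coalgebra.counit (R := k) (A := H))))
    (hcssH : IsCosemisimple k H) (hcssB : IsCosemisimple k B) :
    Equivalence (Linked π) ∧ ∀ X Y : SimpleComodule k H,
      (Linked π X Y ↔ ∀ T : SimpleComodule k B,
        IsConstituent k B T.ρ (cores k H (π : H →ₗ[k] B) X.ρ) ↔
        IsConstituent k B T.ρ (cores k H (π : H →ₗ[k] B) Y.ρ)) ∧
      (Linked π X Y ↔ EmbedsInTensor (LinearMap.range (ι : A →ₗ[k] H)) X.ρ Y.ρ) := by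
  have nontrivial (X : SimpleComodule k H) : Nontrivial X.V := X.isSimple.nontrivial
  have cores_isComod (X : SimpleComodule k H) := X.isComod.cores π
  have refl (X) : Linked π X X := IsConstituent.refl
  have symm {X Y} (h : Linked π X Y) : Linked π Y X :=
    IsConstituent.symm hcssB (cores_isComod X) (cores_isComod Y) h
  have embeds {X Y} (h : Linked π X Y) :
      EmbedsInTensor (LinearMap.range (ι : A →ₗ[k] H)) X.ρ Y.ρ :=
    IsConstituent.embedsInTensor π X.isComod X.isSimple Y.isComod
      (quotientSpaceRight_le_range ι π hcssH hB) h
  have trans {X Y Z} (hXY : Linked π X Y) (hYZ : Linked π Y Z) : Linked π X Z :=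
    (embeds hYZ).isConstituent_cores π hA hXY
  refine ⟨⟨refl, symm, trans⟩, fun X Y => ⟨⟨fun h T => ?_, fun h => ?_⟩, embeds, fun h => ?_⟩⟩
  · exact ⟨(embeds h).isConstituent_cores π hA, (embeds (symm h)).isConstituent_cores π hA⟩
  · exact IsConstituent.of_forall_simple_imp hcssB (cores_isComod X) fun T => (h T).mp
  · exact h.isConstituent_cores π hA (refl X)

open QG in
/-- For an exact sequence `k → A → H → B → k` of cosemisimple
Hopf algebras, the relation `∼_H` (existence of a nonzero `B`-comodule map) is
an equivalence relation on simple `H`-comodules, and `V ∼_H W` iff `V` and `W`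
have the same simple `B`-constituents, iff `V` embeds into `W ⊗ A` as an
`H`-comodule. -/
theorem statement_9 (k : Type u) [Field k] [IsAlgClosed k]
    (A H B : Type u) [Ring A] [HopfAlgebra k A] [Ring H] [HopfAlgebra k H]
    [Ring B] [HopfAlgebra k B]
    (ι : A →ₐc[k] H) (π : H →ₐc[k] B)
    (hinj : Function.Injective ι) (hsurj : Function.Surjective π)
    (hexactA : LinearMap.range (ι : A →ₗ[k] H) =
      quotientSpaceLeft k H (π : H →ₗ[k] B))
    (hexactB : LinearMap.ker (π : H →ₗ[k] B) =
      leftIdealGen k (LinearMap.range (ι : A →ₗ[k] H) ⊓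
        LinearMap.ker (Coalgebra.counit (R := k) (A := H))))
    (hcssA : IsCosemisimple k A) (hcssH : IsCosemisimple k H)
    (hcssB : IsCosemisimple k B) :
    Equivalence (fun X Y : SimpleComodule k H =>
      ∃ f : X.V →ₗ[k] Y.V, f ≠ 0 ∧
        IsComodHom k B (cores k H (π : H →ₗ[k] B) X.ρ)
          (cores k H (π : H →ₗ[k] B) Y.ρ) f) ∧
    ∀ X Y : SimpleComodule k H,
      ((∃ f : X.V →ₗ[k] Y.V, f ≠ 0 ∧
        IsComodHom k B (cores k H (π : H →ₗ[k] B) X.ρ)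
          (cores k H (π : H →ₗ[k] B) Y.ρ) f) ↔
        (∀ T : SimpleComodule k B,
          IsConstituent k B T.ρ (cores k H (π : H →ₗ[k] B) X.ρ) ↔
          IsConstituent k B T.ρ (cores k H (π : H →ₗ[k] B) Y.ρ))) ∧
      ((∃ f : X.V →ₗ[k] Y.V, f ≠ 0 ∧
        IsComodHom k B (cores k H (π : H →ₗ[k] B) X.ρ)
          (cores k H (π : H →ₗ[k] B) Y.ρ) f) ↔
        (∃ g : X.V →ₗ[k] Y.V ⊗[k] H, Function.Injective g ∧
          IsComodHom k H X.ρ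
            (tensorCoact k H Y.ρ (Coalgebra.comul (R := k) (A := H))) g ∧
          ∀ v : X.V, g v ∈ LinearMap.range
            ((LinearMap.range (ι : A →ₗ[k] H)).subtype.lTensor Y.V))) := by
  exact statement_9_general ι π hexactA.le hexactB.le hcssH hcssB
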